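/- Let G̃ and Γ be groups, φ : G̃ → Γ a surjective group homomorphism, and z ∈ G̃ a central element of infinite order such that ker φ equals the cyclic subgroup generated by z. Assume G̃ is residually finite: for every g ∈ G̃ with g ≠ 1 there is a finite-index subgroup of G̃ not containing g. Let θ : Γ → G̃ be a set-theoretic section of φ, and let σ : Γ × Γ → ℤ be the function determined by θ(g)θ(h) = z^{σ(g,h)} θ(gh) for all g,h ∈ Γ. If there exists a 2-cycle c on Γ with ⟨σ,c⟩ ≠ 0, then Γ is not matricially stable. -/

import Mathlib

noncomputable section
open scoped Classical

/-- The algebra of "n×n complex matrices" realized as bounded operators on `ℓ²(Fin n)`,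
equipped with the ℓ²-operator norm. -/
abbrev Mat (n : ℕ) := EuclideanSpace ℂ (Fin n) →L[ℂ] EuclideanSpace ℂ (Fin n)

/-- The boundary of a 2-chain. -/
def chainBoundary {Γ : Type*} [Group Γ] (c : (Γ × Γ) →₀ ℤ) : Γ → ℤ :=
  fun g => c.sum fun p x =>
    x * ((if p.2 = g then 1 else 0) - (if p.1 * p.2 = g then 1 else 0) +
      (if p.1 = g then 1 else 0))

/-- A 2-chain is a 2-cycle if its boundary vanishes. -/
def IsTwoCycle {Γ : Type*} [Group Γ] (c : (Γ × Γ) →₀ ℤ) : Prop :=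
  chainBoundary c = 0

/-- The boundary support of a 2-chain: all `aᵢ`, `bᵢ`, `aᵢbᵢ` for `(aᵢ,bᵢ)` in the support. -/
def boundarySupport {Γ : Type*} [Group Γ] (c : (Γ × Γ) →₀ ℤ) : Set Γ :=
  ⋃ p ∈ c.support, {p.1, p.2, p.1 * p.2}

/-- The pairing of a ℤ-valued 2-cochain with a 2-chain. -/
def pairInt {Γ : Type*} [Group Γ] (σ : Γ → Γ → ℤ) (c : (Γ × Γ) →₀ ℤ) : ℤ :=
  c.sum fun p x => x * σ p.1 p.2

/-- ℤ-valued 2-cocycle condition. -/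
def IsTwoCocycle {Γ : Type*} [Group Γ] (σ : Γ → Γ → ℤ) : Prop :=
  ∀ g₁ g₂ g₃ : Γ, σ g₂ g₃ - σ (g₁ * g₂) g₃ + σ g₁ (g₂ * g₃) - σ g₁ g₂ = 0

/-- The logarithm defined as a power series centered at 1. -/
def matLog {n : ℕ} (m : Mat n) : Mat n :=
  ∑' k : ℕ, ((-1 : ℂ) ^ k / (k + 1)) • (m - 1) ^ (k + 1)

/-- Trace of an operator. -/
def clmTrace {n : ℕ} (f : Mat n) : ℂ :=
  LinearMap.trace ℂ (EuclideanSpace ℂ (Fin n)) (f : EuclideanSpace ℂ (Fin n) →ₗ[ℂ] EuclideanSpace ℂ (Fin n))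

/-- `ρ` is ε-almost multiplicative on the support of `c`. -/
def AlmostMultOn {Γ : Type*} [Group Γ] {n : ℕ} (ρ : Γ → Mat n)
    (c : (Γ × Γ) →₀ ℤ) (ε : ℝ) : Prop :=
  ∀ p ∈ c.support, IsUnit (ρ p.1) ∧ IsUnit (ρ p.2) ∧
    ‖ρ (p.1 * p.2) * Ring.inverse (ρ p.1) * Ring.inverse (ρ p.2) - 1‖ < ε

/-- The pairing `⟨ρ,c⟩` between an almost multiplicative map and a 2-chain. -/
def pairRho {Γ : Type*} [Group Γ] {n : ℕ} (ρ : Γ → Mat n) (c : (Γ × Γ) →₀ ℤ) : ℂ :=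
  (1 / (2 * Real.pi * Complex.I)) *
    c.sum fun p x => (x : ℂ) *
      clmTrace (matLog (ρ (p.1 * p.2) * Ring.inverse (ρ p.2) * Ring.inverse (ρ p.1)))

/-- A sequence of unitary-valued maps forms an asymptotic representation. -/
def IsAsymptoticRep {Γ : Type*} [Group Γ] (N : ℕ → ℕ) (ρ : ∀ k, Γ → Mat (N k)) : Prop :=
  (∀ k g, ρ k g ∈ unitary (Mat (N k))) ∧
    ∀ g h : Γ, Filter.Tendsto (fun k => ‖ρ k (g * h) - ρ k g * ρ k h‖)
      Filter.atTop (nhds 0)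

/-- An asymptotic representation is perturbable to a genuine representation. -/
def Perturbable {Γ : Type*} [Group Γ] (N : ℕ → ℕ) (ρ : ∀ k, Γ → Mat (N k)) : Prop :=
  ∃ ρ' : ∀ k, Γ →* unitary (Mat (N k)),
    ∀ g : Γ, Filter.Tendsto (fun k => ‖ρ k g - (ρ' k g : Mat (N k))‖)
      Filter.atTop (nhds 0)

/-- Matricial stability. -/
def MatriciallyStable (Γ : Type*) [Group Γ] : Prop :=
  ∀ (N : ℕ → ℕ) (ρ : ∀ k, Γ → Mat (N k)), IsAsymptoticRep N ρ → Perturbable N ρ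

/-!
A finite-dimensional unitary representation of `G̃` in which `z` acts as the scalar `exp (i t)`
restricts along `θ` to a projective representation `ρ` of `Γ` with multiplier `exp (i t σ)`.
Residual finiteness provides such representations with `t ≠ 0` arbitrarily small: `z` has long
orbits on `G̃ ⧸ H` for suitable subgroups `H` of finite index, hence eigenvalues close to `1` in
the permutation representation on `ℓ²(G̃ ⧸ H)`, and its eigenspaces are invariant because `z` is
central. As `t → 0` these `ρ` form an asymptotic representation.

If `ρ` is close to a genuine representation `π` on the finitely many group elements involved in
`c`, then `u g = ρ g * (π g)⁻¹` is close to `1` there, and the logarithm of the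
determinant, which is additive and conjugation invariant near `1`, turns
`u g * (π g * u h * (π g)⁻¹) = exp (i t σ(g, h)) • u (g * h)` into the statement that `N i t σ` is a
coboundary on the support of `c`. Since `c` is a cycle, `⟨σ, c⟩ = 0`.
-/

section LocalLog

open Complex Metric

theorem eqOn_of_exp_eqOn {X : Type*} [TopologicalSpace X] {S : Set X} (hS : IsPreconnected S)
    {f g : X → ℂ} (hf : ContinuousOn f S) (hg : ContinuousOn g S)
    (h : ∀ x ∈ S, exp (f x) = exp (g x)) {x₀ : X} (hx₀ : x₀ ∈ S) (h₀ : f x₀ = g x₀) :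
    S.EqOn f g :=
  isCoveringMap_exp.eqOn_of_comp_eqOn hS hf hg
    (fun x hx => Subtype.ext (h x hx)) hx₀ h₀

theorem exists_continuousOn_log {E : Type*} [NormedAddCommGroup E] [NormedSpace ℝ E] {S : Set E}
    (hS : Convex ℝ S) (hSo : IsOpen S) {f : E → ℂ} (hf : ContinuousOn f S)
    (hf₀ : ∀ x ∈ S, f x ≠ 0) {x₀ : E} (hx₀ : x₀ ∈ S) {w : ℂ} (hw : exp w = f x₀) :
    ∃ L : E → ℂ, ContinuousOn L S ∧ L x₀ = w ∧ ∀ x ∈ S, exp (L x) = f x := by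
  have : ContractibleSpace S := hS.contractibleSpace ⟨x₀, hx₀⟩
  have : LocallyPathConnectedSpace S := hSo.locallyPathConnectedSpace
  obtain ⟨F, ⟨hF₀, hF⟩, -⟩ := isCoveringMapOn_exp.existsUnique_continuousMap_lifts
    ⟨S.domRestrict f, hf.domRestrict⟩ (a₀ := ⟨x₀, hx₀⟩) hw fun x => hf₀ x x.2
  refine ⟨Function.extend Subtype.val F 0, ?_, ?_, fun x hx => ?_⟩
  · rw [continuousOn_iff_continuous_domRestrict]
    convert F.continuous using 1
    exact funext fun x => Subtype.val_injective.extend_apply F 0 x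
  · exact (Subtype.val_injective.extend_apply F 0 ⟨x₀, hx₀⟩).trans hF₀
  · exact (congrArg exp (Subtype.val_injective.extend_apply F 0 ⟨x, hx⟩)).trans
      (congrFun hF ⟨x, hx⟩)

/-- `L` is the continuous branch on the open unit ball around `1` of the logarithm of `χ`,
normalized by `L 1 = 0`. For `χ = det` it plays the role of `A ↦ tr (log A)`. -/
structure IsLocalLog {A : Type*} [NormedRing A] (χ : A → ℂ) (L : A → ℂ) : Prop where
  continuousOn : ContinuousOn L (ball 1 1)
  map_one : L 1 = 0
  exp_eq : ∀ a ∈ ball (1 : A) 1, exp (L a) = χ a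

variable {A : Type*} [NormedRing A]

theorem exists_isLocalLog [NormedSpace ℝ A] [CompleteSpace A] (χ : A →* ℂ) (hχ : Continuous χ) :
    ∃ L, IsLocalLog χ L := by
  have hχ₀ : ∀ a ∈ ball (1 : A) 1, χ a ≠ 0 := by
    intro a ha
    have ha : ‖1 - a‖ < 1 := by rwa [← dist_eq_norm, ← mem_ball']
    have hu : IsUnit a := by simpa using isUnit_one_sub_of_norm_lt_one ha
    exact (hu.map χ).ne_zero
  obtain ⟨L, hL, hL₁, hexp⟩ := exists_continuousOn_log (convex_ball (1 : A) 1) isOpen_ball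
    hχ.continuousOn hχ₀ (mem_ball_self one_pos) (w := 0) (by simp)
  exact ⟨L, hL, hL₁, hexp⟩

theorem mul_mem_ball_one {a b : A} (ha : a ∈ ball 1 (1 / 3)) (hb : b ∈ ball 1 (1 / 3)) :
    a * b ∈ ball 1 1 := by
  rw [mem_ball, dist_eq_norm] at *
  calc ‖a * b - 1‖ = ‖(a - 1) * (b - 1) + (a - 1) + (b - 1)‖ := by congr 1; noncomm_ring
    _ ≤ ‖a - 1‖ * ‖b - 1‖ + ‖a - 1‖ + ‖b - 1‖ :=
        norm_add₃_le.trans (by gcongr; exact norm_mul_le _ _)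
    _ < 1 := by nlinarith [norm_nonneg (a - 1), norm_nonneg (b - 1)]

theorem unitary_conj_mem_ball_one [StarRing A] [CStarRing A] (u : unitary A) {a : A} {r : ℝ}
    (ha : a ∈ ball 1 r) : u * a * star (u : A) ∈ ball 1 r := by
  have : u * a * star (u : A) - 1 = u * (a - 1) * star (u : A) := by
    rw [mul_sub, sub_mul, mul_one, Unitary.mul_star_self_of_mem u.2]
  rwa [mem_ball, dist_eq_norm, this, CStarRing.norm_mul_mem_unitary _ (Unitary.star_mem u.2),
    CStarRing.norm_coe_unitary_mul, ← dist_eq_norm]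

theorem mul_star_mem_ball_one [StarRing A] [CStarRing A] {u : unitary A} {a : A} {r : ℝ}
    (h : ‖a - u‖ < r) : a * star (u : A) ∈ ball 1 r := by
  have : a * star (u : A) - 1 = (a - u) * star (u : A) := by
    rw [sub_mul, Unitary.mul_star_self_of_mem u.2]
  rwa [mem_ball, dist_eq_norm, this, CStarRing.norm_mul_mem_unitary _ (Unitary.star_mem u.2)]

theorem norm_exp_I_mul_smul_sub_le [NormedAlgebra ℂ A] (s : ℝ) (a : A) :
    ‖exp (I * s) • a - a‖ ≤ |s| * ‖a‖ :=
  calc ‖exp (I * s) • a - a‖ = ‖exp (I * s) - 1‖ * ‖a‖ := by rw [← norm_smul, sub_smul, one_smul]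
    _ ≤ |s| * ‖a‖ := by gcongr; exact Real.norm_exp_I_mul_ofReal_sub_one_le

theorem exp_I_mul_smul_one_mem_ball [NormedAlgebra ℂ A] [NormOneClass A] {s r : ℝ}
    (hs : |s| < r) : exp (I * s) • (1 : A) ∈ ball 1 r := by
  rw [mem_ball, dist_eq_norm]
  exact (norm_exp_I_mul_smul_sub_le s 1).trans_lt (by simpa using hs)

namespace IsLocalLog

variable {χ : A →* ℂ} {L : A → ℂ} {a b : A}

theorem map_mul [NormedSpace ℝ A] (h : IsLocalLog χ L) (ha : a ∈ ball 1 (1 / 3))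
    (hb : b ∈ ball 1 (1 / 3)) : L (a * b) = L a + L b := by
  have hsub : ball (1 : A) (1 / 3) ⊆ ball 1 1 := ball_subset_ball (by norm_num)
  have hmem : Set.MapsTo (fun p : A × A => p.1 * p.2) (ball 1 (1 / 3) ×ˢ ball 1 (1 / 3))
      (ball 1 1) := fun p hp => mul_mem_ball_one hp.1 hp.2
  refine eqOn_of_exp_eqOn ((convex_ball _ _).prod (convex_ball _ _)).isPreconnected
    (f := fun p => L (p.1 * p.2)) (g := fun p => L p.1 + L p.2)
    (h.continuousOn.comp continuous_mul.continuousOn hmem)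
    ((h.continuousOn.comp continuousOn_fst fun p hp => hsub hp.1).add
      (h.continuousOn.comp continuousOn_snd fun p hp => hsub hp.2))
    (fun p hp => ?_) (x₀ := (1, 1)) (by simp) (by simp [h.map_one])
    (Set.mk_mem_prod ha hb)
  rw [exp_add, h.exp_eq (p.1 * p.2) (hmem hp), h.exp_eq _ (hsub hp.1), h.exp_eq _ (hsub hp.2),
    _root_.map_mul]

theorem map_unitary_conj [NormedSpace ℝ A] [StarRing A] [CStarRing A] (h : IsLocalLog χ L)
    (u : unitary A) (ha : a ∈ ball 1 1) : L (u * a * star (u : A)) = L a := by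
  have hmem : ∀ x ∈ ball (1 : A) 1, u * x * star (u : A) ∈ ball 1 1 := fun x hx =>
    unitary_conj_mem_ball_one u hx
  refine eqOn_of_exp_eqOn (convex_ball _ _).isPreconnected
    (h.continuousOn.comp (by fun_prop) hmem) h.continuousOn (fun x hx => ?_)
    (mem_ball_self one_pos) (by simp) ha
  have hu : χ u * χ (star (u : A)) = 1 := by rw [← _root_.map_mul]; simp
  simp only [Function.comp_apply]
  rw [h.exp_eq _ (hmem x hx), h.exp_eq x hx, _root_.map_mul, _root_.map_mul]
  linear_combination χ x * hu

theorem map_exp_smul_one [NormedAlgebra ℂ A] [NormOneClass A] (h : IsLocalLog χ L) {n : ℕ}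
    (hχ : ∀ w : ℂ, χ (w • 1) = w ^ n) {s : ℝ} (hs : |s| < 1) :
    L (exp (I * s) • 1) = n * (I * s) := by
  have hmem : ∀ r ∈ ball (0 : ℝ) 1, exp (I * r) • (1 : A) ∈ ball 1 1 := fun r hr =>
    exp_I_mul_smul_one_mem_ball (by simpa using hr)
  refine eqOn_of_exp_eqOn (convex_ball _ _).isPreconnected
    (f := fun r : ℝ => L (exp (I * r) • 1)) (g := fun r : ℝ => n * (I * r))
    (h.continuousOn.comp (by fun_prop) hmem) (by fun_prop) (fun r hr => ?_)
    (mem_ball_self one_pos) (by simp [h.map_one]) (by simpa using hs)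
  rw [h.exp_eq _ (hmem r hr), hχ, exp_nat_mul]

end IsLocalLog

end LocalLog

section Pairing

variable {Γ : Type*} [Group Γ]

theorem IsTwoCycle.sum_coboundary_eq_zero {c : (Γ × Γ) →₀ ℤ} (hc : IsTwoCycle c) {M : Type*}
    [AddCommGroup M] (l : Γ → M) :
    (c.sum fun p x => x • (l p.2 - l (p.1 * p.2) + l p.1)) = 0 := by
  have hd : (c.sum fun p x => Finsupp.single p.2 x - Finsupp.single (p.1 * p.2) x +
      Finsupp.single p.1 x) = 0 := by
    ext g
    have hg := congrFun hc g
    simp only [chainBoundary, Pi.zero_apply] at hg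
    rw [Finsupp.sum_apply, Finsupp.zero_apply, ← hg]
    exact Finsupp.sum_congr fun p _ => by simp [Finsupp.single_apply, mul_add, mul_sub]
  have := congrArg (Finsupp.linearCombination ℤ l) hd
  simpa [map_finsuppSum, smul_add, smul_sub] using this

theorem coe_zpow_of_eq_smul_one {A : Type*} [Ring A] [StarMul A] [Algebra ℂ A] {u : unitary A}
    {w : ℂ} (hw : w ≠ 0) (hu : (u : A) = w • 1) (m : ℤ) :
    ((u ^ m : unitary A) : A) = w ^ m • 1 := by
  have h : Unitary.toUnits u = Units.map (algebraMap ℂ A) (Units.mk0 w hw) :=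
    Units.ext (by simpa [Algebra.algebraMap_eq_smul_one] using hu)
  have hm := congrArg Units.val (congrArg (· ^ m) h)
  simpa [← map_zpow, Algebra.algebraMap_eq_smul_one] using hm

/-- `ρ` is a projective representation with multiplier `exp (i s(g, h))`. -/
def IsProjectiveRep {A : Type*} [Ring A] [Module ℂ A] (ρ : Γ → A) (s : Γ → Γ → ℝ) : Prop :=
  ∀ g h, ρ g * ρ h = Complex.exp (Complex.I * s g h) • ρ (g * h)

open Complex Metric

variable {A : Type*} [NormedRing A] [StarRing A] [NormedAlgebra ℂ A]

namespace IsProjectiveRep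

variable {ρ : Γ → A} {s : Γ → Γ → ℝ}

theorem mul_star_hom_mul_conj (hρ : IsProjectiveRep ρ s) (π : Γ →* unitary A) (g h : Γ) :
    ρ g * star (π g : A) * (π g * (ρ h * star (π h : A)) * star (π g : A)) =
      exp (I * s g h) • 1 * (ρ (g * h) * star (π (g * h) : A)) :=
  calc ρ g * star (π g : A) * (π g * (ρ h * star (π h : A)) * star (π g : A))
      = ρ g * (star (π g : A) * π g) * ρ h * (star (π h : A) * star (π g : A)) := by
        simp only [mul_assoc]
    _ = ρ g * ρ h * star (π (g * h) : A) := by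
        rw [Unitary.star_mul_self_of_mem (π g).2, mul_one, map_mul, Submonoid.coe_mul, star_mul]
    _ = _ := by rw [hρ, smul_mul_assoc, smul_one_mul]

theorem of_extension {G : Type*} [Group G] (π : G →* unitary A) {z : G} {t : ℝ}
    (hπ : (π z : A) = exp (I * t) • 1) {θ : Γ → G} {σ : Γ → Γ → ℤ}
    (hσ : ∀ g h, θ g * θ h = z ^ σ g h * θ (g * h)) :
    IsProjectiveRep (fun g => (π (θ g) : A)) fun g h => t * σ g h := by
  intro g h
  have hexp : exp (I * (t * σ g h : ℝ)) = exp (I * t) ^ σ g h := by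
    rw [← exp_int_mul]
    push_cast
    ring_nf
  rw [hexp, ← Submonoid.coe_mul, ← map_mul, hσ, map_mul, map_zpow, Submonoid.coe_mul,
    coe_zpow_of_eq_smul_one (exp_ne_zero _) hπ, smul_one_mul]

variable [CStarRing A] [NormOneClass A] {χ : A →* ℂ} {n : ℕ} {L : A → ℂ}

theorem localLog_coboundary_eq (hρ : IsProjectiveRep ρ s) (hL : IsLocalLog χ L)
    (hχ : ∀ w : ℂ, χ (w • 1) = w ^ n) (π : Γ →* unitary A) {g h : Γ} (hs : |s g h| < 1 / 3)
    (hg : ‖ρ g - π g‖ < 1 / 3) (hh : ‖ρ h - π h‖ < 1 / 3)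
    (hgh : ‖ρ (g * h) - π (g * h)‖ < 1 / 3) :
    L (ρ h * star (π h : A)) - L (ρ (g * h) * star (π (g * h) : A)) + L (ρ g * star (π g : A)) =
      n * (I * s g h) := by
  have hρg := mul_star_mem_ball_one hg
  have hρh := mul_star_mem_ball_one hh
  have hconj : π g * (ρ h * star (π h : A)) * star (π g : A) ∈ ball (1 : A) (1 / 3) :=
    unitary_conj_mem_ball_one _ hρh
  have key := congrArg L (hρ.mul_star_hom_mul_conj π g h)
  rw [hL.map_mul hρg hconj, hL.map_unitary_conj _ (ball_subset_ball (by norm_num) hρh),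
    hL.map_mul (exp_I_mul_smul_one_mem_ball hs) (mul_star_mem_ball_one hgh),
    hL.map_exp_smul_one hχ (hs.trans (by norm_num))] at key
  linear_combination key

theorem sum_multiplier_eq_zero [CompleteSpace A] (hρ : IsProjectiveRep ρ s) (hχc : Continuous χ)
    (hn : n ≠ 0) (hχ : ∀ w : ℂ, χ (w • 1) = w ^ n) (π : Γ →* unitary A) {c : (Γ × Γ) →₀ ℤ}
    (hc : IsTwoCycle c) (hs : ∀ p ∈ c.support, |s p.1 p.2| < 1 / 3)
    (hπ : ∀ g ∈ boundarySupport c, ‖ρ g - π g‖ < 1 / 3) :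
    (c.sum fun p x => x • s p.1 p.2) = 0 := by
  obtain ⟨L, hL⟩ := exists_isLocalLog χ hχc
  have hmem : ∀ p ∈ c.support, ∀ g ∈ ({p.1, p.2, p.1 * p.2} : Set Γ), ‖ρ g - π g‖ < 1 / 3 :=
    fun p hp g hg => hπ g (Set.mem_biUnion hp hg)
  have hsum : (c.sum fun p x => x • (n * (I * s p.1 p.2) : ℂ)) = 0 := by
    rw [← hc.sum_coboundary_eq_zero fun g => L (ρ g * star (π g : A))]
    refine Finsupp.sum_congr fun p hp => ?_
    rw [hρ.localLog_coboundary_eq hL hχ π (hs p hp) (hmem p hp _ (by simp))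
      (hmem p hp _ (by simp)) (hmem p hp _ (by simp))]
  have hfactor : (n : ℂ) * I * ((c.sum fun p x => x • s p.1 p.2 : ℝ) : ℂ) = 0 := by
    rw [← hsum, Finsupp.sum, Finsupp.sum, ofReal_sum, Finset.mul_sum]
    exact Finset.sum_congr rfl fun p _ => by push_cast [zsmul_eq_mul]; ring
  simpa [hn] using hfactor

end IsProjectiveRep

end Pairing

section EigenspaceRep

variable {G : Type*} [Group G]

/-- The unitary representation on `ℓ²(X)` permuting the standard basis along the action of `G` on
`X`. -/
def permRep (G X : Type*) [Group G] [MulAction G X] [Fintype X] :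
    Representation ℂ G (EuclideanSpace ℂ X) where
  toFun g :=
    (LinearIsometryEquiv.piLpCongrLeft 2 ℂ ℂ (MulAction.toPerm g)).toLinearEquiv.toLinearMap
  map_one' := by ext; simp
  map_mul' g h := by ext; simp [mul_smul]

variable {X : Type*} [MulAction G X] [Fintype X]

theorem norm_permRep_apply (g : G) (v : EuclideanSpace ℂ X) : ‖permRep G X g v‖ = ‖v‖ :=
  (LinearIsometryEquiv.piLpCongrLeft 2 ℂ ℂ (MulAction.toPerm g)).norm_map v

theorem permRep_single (g : G) (x : X) (a : ℂ) :
    permRep G X g (EuclideanSpace.single x a) = EuclideanSpace.single (g • x) a :=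
  EuclideanSpace.piLpCongrLeft_single _ x a

theorem sum_inv_pow_smul_pow_mem_eigenspace {K M : Type*} [Field K] [AddCommGroup M] [Module K M]
    (T : Module.End K M) {ω : K} {m : ℕ} (hω₀ : ω ≠ 0) (hω : ω ^ m = 1) {v : M}
    (hv : (T ^ m) v = v) :
    ∑ j ∈ Finset.range m, ω⁻¹ ^ j • (T ^ j) v ∈ T.eigenspace ω := by
  set f : ℕ → M := fun j => ω⁻¹ ^ j • (T ^ j) v with hf
  have hshift : ∑ j ∈ Finset.range m, f (j + 1) = ∑ j ∈ Finset.range m, f j := by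
    have hend : f m = f 0 := by simp [hf, hω, hv]
    exact add_right_cancel (b := f 0)
      (by rw [← Finset.sum_range_succ', Finset.sum_range_succ, hend])
  rw [Module.End.mem_eigenspace_iff, ← hshift, Finset.smul_sum, hshift, map_sum]
  refine Finset.sum_congr rfl fun j _ => ?_
  simp only [hf, map_smul, smul_smul, pow_succ', Module.End.mul_apply, mul_inv_cancel_left₀ hω₀]

theorem hasEigenvalue_permRep (g : G) (x : X) {ω : ℂ}
    (hω : ω ^ MulAction.period g x = 1) (hx : 0 < MulAction.period g x) :
    Module.End.HasEigenvalue (permRep G X g) ω := by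
  have hpow : ∀ j : ℕ, (permRep G X g ^ j) (EuclideanSpace.single x 1) =
      EuclideanSpace.single (g ^ j • x) 1 := fun j => by rw [← map_pow, permRep_single]
  have hω₀ : ω ≠ 0 := by rintro rfl; simp [hx.ne'] at hω
  have hmem := sum_inv_pow_smul_pow_mem_eigenspace (permRep G X g) hω₀ hω
    (v := EuclideanSpace.single x 1) (by rw [hpow, MulAction.pow_period_smul])
  refine Module.End.hasEigenvalue_of_hasEigenvector ⟨hmem, fun h₀ => ?_⟩
  have hcoord := congrArg (fun v : EuclideanSpace ℂ X => v x) h₀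
  have hzero : ∀ j ∈ Finset.range (MulAction.period g x), j ≠ 0 → x ≠ g ^ j • x :=
    fun j hj hj₀ => (MulAction.pow_smul_ne_of_lt_period (pos_of_ne_zero hj₀)
      (Finset.mem_range.mp hj)).symm
  simp only [hpow, PiLp.zero_apply] at hcoord
  rw [WithLp.ofLp_sum, Finset.sum_apply, Finset.sum_eq_single_of_mem 0 (by simpa using hx)
    fun j hj hj₀ => by simp [hzero j hj hj₀]] at hcoord
  simp at hcoord

variable {E : Type*} [NormedAddCommGroup E] [InnerProductSpace ℂ E] [FiniteDimensional ℂ E]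

theorem exists_unitary_rep_of_isometric {R : Representation ℂ G E} (hR : ∀ g v, ‖R g v‖ = ‖v‖) :
    ∃ π : G →* unitary (Mat (Module.finrank ℂ E)),
      ∀ (z : G) (ω : ℂ), R z = ω • 1 → (π z : Mat (Module.finrank ℂ E)) = ω • 1 := by
  let e := (stdOrthonormalBasis ℂ E).repr
  let T : G →* Mat (Module.finrank ℂ E) :=
    (e.toContinuousLinearEquiv.conjContinuousAlgEquiv : (E →L[ℂ] E) →* _).comp
      ((Module.End.toContinuousLinearMap (𝕜 := ℂ) E : _ →* E →L[ℂ] E).comp R)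
  have hT : ∀ g v, T g v = e (R g (e.symm v)) := fun g v => rfl
  have hmem : ∀ g, T g ∈ unitary (Mat (Module.finrank ℂ E)) := fun g =>
    ((Group.isUnit g).map T).mem_unitary_of_star_mul_self <|
      ((T g).norm_map_iff_adjoint_comp_self).mp fun v => by simp [hT, hR]
  exact ⟨T.codRestrict _ hmem, fun z ω hz => ContinuousLinearMap.ext fun v => by
    simp [hT, hz]⟩

theorem exists_unitary_rep_of_hasEigenvalue {R : Representation ℂ G E}
    (hR : ∀ g v, ‖R g v‖ = ‖v‖) {z : G} (hz : z ∈ Subgroup.center G) {ω : ℂ}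
    (hω : Module.End.HasEigenvalue (R z) ω) :
    ∃ N ≠ 0, ∃ π : G →* unitary (Mat N), (π z : Mat N) = ω • 1 := by
  have hinv : ∀ g, Set.MapsTo (R g) (Module.End.eigenspace (R z) ω)
      (Module.End.eigenspace (R z) ω) := fun g =>
    Module.End.mapsTo_genEigenspace_of_comm
      (Commute.map (Subgroup.mem_center_iff.mp hz g).symm R) ω 1
  let S := R.subrepresentation _ fun g v hv => hinv g hv
  have hS : ∀ g v, ‖S g v‖ = ‖v‖ := fun g v => hR g v
  have hSz : S z = ω • 1 := LinearMap.ext fun v =>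
    Subtype.ext (Module.End.mem_eigenspace_iff.mp v.2)
  obtain ⟨π, hπ⟩ := exists_unitary_rep_of_isometric hS
  have : Nontrivial (Module.End.eigenspace (R z) ω) := Submodule.nontrivial_iff_ne_bot.mpr hω
  exact ⟨_, Module.finrank_pos.ne', π, hπ z ω hSz⟩

theorem exists_finiteIndex_lt_period {z : G}
    (hsep : ∀ n : ℕ, 0 < n → ∃ H : Subgroup G, H.FiniteIndex ∧ z ^ n ∉ H) (k : ℕ) :
    ∃ H : Subgroup G, H.FiniteIndex ∧ k < MulAction.period z ((1 : G) : G ⧸ H) := by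
  -- Every positive integer up to `k` divides `k!`.
  obtain ⟨H, hH, hz⟩ := hsep k.factorial k.factorial_pos
  refine ⟨H, hH, lt_of_not_ge fun hle => hz ?_⟩
  have hpos : 0 < MulAction.period z ((1 : G) : G ⧸ H) :=
    Function.minimalPeriod_pos_of_mem_periodicPts ((MulAction.injective z).mem_periodicPts _)
  have hfix : ((z ^ k.factorial * 1 : G) : G ⧸ H) = (1 : G) :=
    MulAction.pow_smul_eq_iff_period_dvd.mpr (Nat.dvd_factorial hpos hle)
  simpa using QuotientGroup.eq.mp hfix

open Complex in
theorem exists_unitary_map_eq_exp {z : G} (hz : z ∈ Subgroup.center G)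
    (hsep : ∀ n : ℕ, 0 < n → ∃ H : Subgroup G, H.FiniteIndex ∧ z ^ n ∉ H) {ε : ℝ} (hε : 0 < ε) :
    ∃ N ≠ 0, ∃ π : G →* unitary (Mat N), ∃ t : ℝ, 0 < t ∧ t < ε ∧
      (π z : Mat N) = exp (I * t) • 1 := by
  obtain ⟨k, hk⟩ := exists_nat_gt (2 * Real.pi / ε)
  obtain ⟨H, hH, hm⟩ := exists_finiteIndex_lt_period hsep k
  set m := MulAction.period z ((1 : G) : G ⧸ H)
  have hm₀ : (0 : ℝ) < m := by exact_mod_cast Nat.zero_lt_of_lt hm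
  have hkm : (k : ℝ) < m := by exact_mod_cast hm
  have := Fintype.ofFinite (G ⧸ H)
  have hroot : exp (I * (2 * Real.pi / m : ℝ)) ^ m = 1 := by
    have hm₁ : (m : ℂ) ≠ 0 := by exact_mod_cast hm₀.ne'
    rw [← exp_nat_mul, ← exp_two_pi_mul_I]
    push_cast
    congr 1
    field_simp
  obtain ⟨N, hN, π, hπ⟩ := exists_unitary_rep_of_hasEigenvalue (R := permRep G (G ⧸ H))
    norm_permRep_apply hz (hasEigenvalue_permRep z _ hroot (Nat.zero_lt_of_lt hm))
  exact ⟨N, hN, π, 2 * Real.pi / m, by positivity,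
    (div_lt_comm₀ hε hm₀).mp (hk.trans hkm), hπ⟩

end EigenspaceRep

section Stability

open Filter Topology

variable {Γ : Type*} [Group Γ] {N : ℕ → ℕ} {ρ : ∀ k, Γ → Mat (N k)}

theorem isAsymptoticRep_of_isProjectiveRep {s : ℕ → Γ → Γ → ℝ}
    (hu : ∀ k g, ρ k g ∈ unitary (Mat (N k))) (hρ : ∀ k, IsProjectiveRep (ρ k) (s k))
    (hs : ∀ g h, Tendsto (fun k => s k g h) atTop (𝓝 0)) : IsAsymptoticRep N ρ := by
  refine ⟨hu, fun g h => squeeze_zero (fun k => norm_nonneg _) (fun k => ?_)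
    (tendsto_zero_iff_abs_tendsto_zero _ |>.mp (hs g h))⟩
  have hle : ‖ρ k (g * h)‖ ≤ 1 := by
    rw [← one_mul (ρ k (g * h)), CStarRing.norm_mul_mem_unitary _ (hu k _)]
    exact ContinuousLinearMap.norm_id_le
  rw [hρ k g h, norm_sub_rev]
  exact (norm_exp_I_mul_smul_sub_le _ _).trans (mul_le_of_le_one_right (abs_nonneg _) hle)

/-- The determinant as a multiplicative character of the algebra `Mat n`. -/
def detHom (n : ℕ) : Mat n →* ℂ :=
  LinearMap.det.comp (ContinuousLinearMap.toLinearMapRingHom : Mat n →+* _).toMonoidHom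

theorem continuous_detHom (n : ℕ) : Continuous (detHom n) :=
  ContinuousLinearMap.continuous_det

theorem detHom_smul_one (n : ℕ) (w : ℂ) : detHom n (w • 1) = w ^ n := by
  simp [detHom]

theorem finite_boundarySupport (c : (Γ × Γ) →₀ ℤ) : (boundarySupport c).Finite :=
  c.support.finite_toSet.biUnion fun _ _ => Set.toFinite _

theorem not_perturbable_of_pairInt_ne_zero {t : ℕ → ℝ} {σ : Γ → Γ → ℤ}
    (hρ : ∀ k, IsProjectiveRep (ρ k) fun g h => t k * σ g h) (ht : Tendsto t atTop (𝓝 0))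
    (ht₀ : ∀ k, t k ≠ 0) (hN : ∀ k, N k ≠ 0) {c : (Γ × Γ) →₀ ℤ} (hc : IsTwoCycle c)
    (hpair : pairInt σ c ≠ 0) : ¬ Perturbable N ρ := by
  rintro ⟨ρ', hρ'⟩
  have hsmall : ∀ᶠ k in atTop, ∀ p ∈ c.support, |t k * σ p.1 p.2| < 1 / 3 :=
    (Filter.eventually_all_finset _).mpr fun p _ => by
      have := (ht.mul_const (σ p.1 p.2 : ℝ)).abs
      rw [zero_mul, abs_zero] at this
      exact this.eventually_lt_const (by norm_num)
  have hclose : ∀ᶠ k in atTop, ∀ g ∈ boundarySupport c, ‖ρ k g - ρ' k g‖ < 1 / 3 :=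
    (Filter.eventually_all_finite (finite_boundarySupport c)).mpr fun g _ =>
      (hρ' g).eventually_lt_const (by norm_num)
  obtain ⟨k, hk, hk'⟩ := (hsmall.and hclose).exists
  have : NeZero (N k) := ⟨hN k⟩
  have hzero := (hρ k).sum_multiplier_eq_zero (continuous_detHom _) (hN k) (detHom_smul_one _)
    (ρ' k) hc hk hk'
  have hfactor : (c.sum fun p x => x • (t k * σ p.1 p.2)) = t k * pairInt σ c := by
    simp only [pairInt, Finsupp.sum, Int.cast_sum, Finset.mul_sum]
    exact Finset.sum_congr rfl fun p _ => by push_cast [zsmul_eq_mul]; ring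
  rw [hfactor] at hzero
  exact mul_ne_zero (ht₀ k) (Int.cast_ne_zero.mpr hpair) hzero

theorem stmt1_general {G : Type*} [Group G] {z : G} (hz : z ∈ Subgroup.center G)
    (hsep : ∀ n : ℕ, 0 < n → ∃ H : Subgroup G, H.FiniteIndex ∧ z ^ n ∉ H)
    {θ : Γ → G} {σ : Γ → Γ → ℤ} (hσ : ∀ g h, θ g * θ h = z ^ σ g h * θ (g * h))
    {c : (Γ × Γ) →₀ ℤ} (hc : IsTwoCycle c) (hpair : pairInt σ c ≠ 0) :
    ¬ MatriciallyStable Γ := by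
  choose N hN π t ht₀ ht hπ using fun k : ℕ =>
    exists_unitary_map_eq_exp hz hsep (Nat.one_div_pos_of_nat (α := ℝ) (n := k))
  have htlim : Tendsto t atTop (𝓝 0) := squeeze_zero (fun k => (ht₀ k).le) (fun k => (ht k).le)
    tendsto_one_div_add_atTop_nhds_zero_nat
  have hproj := fun k => IsProjectiveRep.of_extension (π k) (hπ k) hσ
  have hasymp := isAsymptoticRep_of_isProjectiveRep (fun k g => (π k (θ g)).2) hproj
    fun g h => by simpa using htlim.mul_const (σ g h : ℝ)
  exact fun hstable => not_perturbable_of_pairInt_ne_zero hproj htlim (fun k => (ht₀ k).ne') hN hc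
    hpair (hstable N _ hasymp)

end Stability

/-- If `φ : G̃ → Γ` is surjective with kernel generated by a central element `z`
of infinite order, `G̃` is residually finite, `θ` is a set-theoretic section of `φ`,
`σ : Γ × Γ → ℤ` is determined by `θ(g)θ(h) = z^{σ(g,h)} θ(gh)`, and `σ` pairs nontrivially
with some 2-cycle `c`, then `Γ` is not matricially stable. -/
theorem stmt1 {G : Type*} {Γ : Type*} [Group G] [Group Γ]
    (φ : G →* Γ) (hφ : Function.Surjective φ)
    (z : G) (hz : z ∈ Subgroup.center G) (hzord : ¬ IsOfFinOrder z)
    (hker : φ.ker = Subgroup.zpowers z)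
    (hrf : ∀ g : G, g ≠ 1 → ∃ H : Subgroup G, H.FiniteIndex ∧ g ∉ H)
    (θ : Γ → G) (hθ : ∀ g : Γ, φ (θ g) = g)
    (σ : Γ → Γ → ℤ) (hσ : ∀ g h : Γ, θ g * θ h = z ^ (σ g h) * θ (g * h))
    (c : (Γ × Γ) →₀ ℤ) (hc : IsTwoCycle c) (hpair : pairInt σ c ≠ 0) :
    ¬ MatriciallyStable Γ :=
  stmt1_general hz (fun n hn => hrf _ fun h => hzord (isOfFinOrder_iff_pow_eq_one.mpr ⟨n, hn, h⟩))
    hσ hc hpair
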